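/- The minimum cardinality of a short covering of 𝔽_7³ is 5, the minimum cardinality of a short covering of 𝔽_8³ is 6, and the minimum cardinality of a short covering of 𝔽_9³ is 6. -/

import Mathlib

open Set Pointwise

variable {F : Type*} [Field F]

/-- Hamming distance on `𝔽_q³`. -/
noncomputable def hdist (u v : Fin 3 → F) : ℕ := Set.ncard {i : Fin 3 | u i ≠ v i}

/-- The ball of radius 1 centered at `u`. -/
def ball (u : Fin 3 → F) : Set (Fin 3 → F) := {v | hdist u v ≤ 1}

/-- The extended ball of `u`: the union of the balls centered at scalar multiples of `u`. -/
def extBall (u : Fin 3 → F) : Set (Fin 3 → F) := ⋃ l : F, ball (l • u)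

/-- `D_q`: vectors with pairwise distinct, nonzero coordinates. -/
def Dq : Set (Fin 3 → F) :=
  {u | u 0 ≠ u 1 ∧ u 0 ≠ u 2 ∧ u 1 ≠ u 2 ∧ u 0 ≠ 0 ∧ u 1 ≠ 0 ∧ u 2 ≠ 0}

/-- `B̃(u) = B(u) ∩ D_q`. -/
def ballD (u : Fin 3 → F) : Set (Fin 3 → F) := ball u ∩ Dq

/-- `Ẽ(u) = E(u) ∩ D_q`. -/
def extBallD (u : Fin 3 → F) : Set (Fin 3 → F) := extBall u ∩ Dq

/-- `H` is a short covering if the extended balls centered at its elements cover the space. -/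
def ShortCovering (H : Set (Fin 3 → F)) : Prop := (⋃ h ∈ H, extBall h) = Set.univ

instance : Fact (Nat.Prime 7) := ⟨by norm_num⟩

/-!
A vector `h` covers a vector with nonzero coordinates exactly when the two have the same ratio
between some two of their coordinates, so everything depends on the ratios attained by `H`.

Lower bound: if `q ≥ 5` and `H` is a short covering with `|H| + 1 < q`, then for every `i` some
nonzero `g i ∈ H` vanishes at `i`. One of these vectors, say `g k`, differs from the two others, so
that for both pairs of coordinates containing `k` two elements of `H` attain no nonzero ratio. Fix
a nonzero ratio which `H` does not attain on the third pair; then each of the `q - 1` nonzero ratios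
is accounted for by one of the first two pairs, whence `q - 1 ≤ 2 * (|H| - 2)`.

Upper bound: for odd `q`, two of the three coordinates of a vector without zeros lie in the same
square class, so it suffices that `H` attains every square ratio on every pair of coordinates.
A near transversal of the Cayley table of the cyclic group of the `(q - 1) / 2` nonzero squares
gives all but three of these ratios, and `(a, 1, 0)`, `(0, b, 1)`, `(c, 0, 1)` give the missing
ones. For `q = 8`, if neither `v 0 / v 1` nor `v 1 / v 2` is among `g ^ 2, …, g ^ 5`, where `g`
generates the unit group, then `v 0 / v 2` is among `g ^ (-2), …, g ^ 2`; six vectors attain all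
these ratios.
-/

omit [Field F] in
theorem hdist_le_one_iff {u v : Fin 3 → F} :
    hdist u v ≤ 1 ↔ ∃ i j, i ≠ j ∧ u i = v i ∧ u j = v j := by
  rw [hdist, ncard_le_one]
  simp only [mem_ofPred_eq, Fin.forall_fin_succ, Fin.exists_fin_succ, Fin.succ_zero_eq_one,
    Fin.succ_one_eq_two, Fin.reduceEq, IsEmpty.forall_iff, IsEmpty.exists_iff, ne_eq]
  tauto

theorem mem_extBall_iff {h v : Fin 3 → F} :
    v ∈ extBall h ↔ ∃ l : F, ∃ i j, i ≠ j ∧ l * h i = v i ∧ l * h j = v j := by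
  simp only [extBall, ball, mem_iUnion, mem_ofPred_eq, hdist_le_one_iff, Pi.smul_apply, smul_eq_mul]

theorem ShortCovering.exists_mem_extBall {H : Set (Fin 3 → F)} (hH : ShortCovering H)
    (v : Fin 3 → F) : ∃ h ∈ H, v ∈ extBall h := by
  simpa only [mem_iUnion, exists_prop] using hH.ge (mem_univ v)

/-- The ratios `h i / h j` attained by the vectors `h ∈ H` with `h j ≠ 0`; the ratio `0` is
included, since it is what covers the vectors vanishing at `i`. -/
def ratios (H : Set (Fin 3 → F)) (i j : Fin 3) : Set F :=
  (fun h => h i / h j) '' {h ∈ H | h j ≠ 0}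

section Ratios

variable {H : Set (Fin 3 → F)} {i j k : Fin 3} {s : F}

theorem mem_ratios_iff : s ∈ ratios H i j ↔ ∃ h ∈ H, h j ≠ 0 ∧ h i = s * h j := by
  simp only [ratios, mem_image, mem_ofPred_eq, and_assoc]
  exact exists_congr fun h => and_congr_right fun _ => and_congr_right fun hj => div_eq_iff hj

theorem exists_mem_extBall_of_mem_ratios {v : Fin 3 → F} (hij : i ≠ j) (hs : s ∈ ratios H i j)
    (hv : v i = s * v j) : ∃ h ∈ H, v ∈ extBall h := by
  obtain ⟨h, hH, hj, hi⟩ := mem_ratios_iff.mp hs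
  refine ⟨h, hH, mem_extBall_iff.mpr ⟨v j / h j, i, j, hij, ?_, div_mul_cancel₀ _ hj⟩⟩
  rw [hi, hv]
  field_simp

theorem div_mem_ratios_of_mul_eq {h v : Fin 3 → F} {l : F} (hh : h ∈ H) (hi : l * h i = v i)
    (hj : l * h j = v j) (hvj : v j ≠ 0) : v i / v j ∈ ratios H i j := by
  rw [← hj] at hvj
  refine ⟨h, ⟨hh, right_ne_zero_of_mul hvj⟩, ?_⟩
  rw [← hi, ← hj, mul_div_mul_left _ _ (left_ne_zero_of_mul hvj)]

theorem ShortCovering.div_mem_ratios (hH : ShortCovering H) (hij : i ≠ j) (hik : i ≠ k)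
    (hjk : j ≠ k) {v : Fin 3 → F} (hvj : v j ≠ 0) (hvk : v k ≠ 0) :
    v i / v j ∈ ratios H i j ∨ v i / v k ∈ ratios H i k ∨ v j / v k ∈ ratios H j k := by
  obtain ⟨h, hh, hv⟩ := hH.exists_mem_extBall v
  obtain ⟨l, a, b, hab, ha, hb⟩ := mem_extBall_iff.mp hv
  have hagree : (l * h i = v i ∧ l * h j = v j) ∨ (l * h i = v i ∧ l * h k = v k) ∨
      (l * h j = v j ∧ l * h k = v k) := by
    have hcases (t : Fin 3) : t = i ∨ t = j ∨ t = k := by omega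
    rcases hcases a with rfl | rfl | rfl <;> rcases hcases b with rfl | rfl | rfl <;> tauto
  exact hagree.imp (fun e => div_mem_ratios_of_mul_eq hh e.1 e.2 hvj)
    (Or.imp (fun e => div_mem_ratios_of_mul_eq hh e.1 e.2 hvk)
      (fun e => div_mem_ratios_of_mul_eq hh e.1 e.2 hvk))

theorem ShortCovering.mem_ratios_or_mul_mem_ratios (hH : ShortCovering H) (hij : i ≠ j)
    (hik : i ≠ k) (hjk : j ≠ k) (y : F) {x : F} (hx : x ≠ 0) :
    y ∈ ratios H i j ∨ y * x ∈ ratios H i k ∨ x ∈ ratios H j k := by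
  let v := Function.update (Function.update (fun _ => (1 : F)) j x) i (y * x)
  have hvi : v i = y * x := by simp [v]
  have hvj : v j = x := by simp [v, hij.symm]
  have hvk : v k = 1 := by simp [v, hik.symm, hjk.symm]
  have hv := hH.div_mem_ratios hij hik hjk (hvj ▸ hx) (hvk ▸ one_ne_zero)
  rwa [hvi, hvj, hvk, mul_div_cancel_right₀ _ hx, div_one, div_one] at hv

theorem shortCovering_of_mem_ratios (h0 : ∀ i, ∃ j, i ≠ j ∧ 0 ∈ ratios H i j)
    (hH : ∀ x z : Fˣ, (x : F) ∈ ratios H 0 1 ∨ (z : F) ∈ ratios H 1 2 ∨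
      ((x * z : Fˣ) : F) ∈ ratios H 0 2) : ShortCovering H := by
  refine eq_univ_of_forall fun v => ?_
  simp only [mem_iUnion, exists_prop]
  by_cases hv : ∃ i, v i = 0
  · obtain ⟨i, hi⟩ := hv
    obtain ⟨j, hij, hj⟩ := h0 i
    exact exists_mem_extBall_of_mem_ratios hij hj (by rw [hi, zero_mul])
  push Not at hv
  let u (i : Fin 3) : Fˣ := Units.mk0 (v i) (hv i)
  have hu (i j : Fin 3) : v i = ((u i / u j : Fˣ) : F) * v j := by simp [u, hv j]
  rcases hH (u 0 / u 1) (u 1 / u 2) with h | h | h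
  · exact exists_mem_extBall_of_mem_ratios (by decide) h (hu 0 1)
  · exact exists_mem_extBall_of_mem_ratios (by decide) h (hu 1 2)
  · rw [div_mul_div_cancel] at h
    exact exists_mem_extBall_of_mem_ratios (by decide) h (hu 0 2)

end Ratios

section LowerBound

variable [Finite F] {H : Set (Fin 3 → F)} {i j k : Fin 3}

theorem ncard_ratios_le : (ratios H i j).ncard ≤ H.ncard :=
  (ncard_image_le (toFinite _)).trans (ncard_le_ncard (sep_subset _ _))

theorem exists_ne_zero_notMem_ratios (hcard : H.ncard + 1 < Nat.card F) (i j : Fin 3) :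
    ∃ x : F, x ≠ 0 ∧ x ∉ ratios H i j := by
  have hlt : (insert 0 (ratios H i j)).ncard < (univ : Set F).ncard := by
    grw [ncard_insert_le, ncard_ratios_le, ncard_univ]
    exact hcard
  obtain ⟨x, -, hx⟩ := exists_mem_notMem_of_ncard_lt_ncard hlt
  exact ⟨x, by simpa only [mem_insert_iff, not_or] using hx⟩

theorem ShortCovering.exists_ne_zero_apply_eq_zero (hH : ShortCovering H)
    (hcard : H.ncard + 1 < Nat.card F) (i : Fin 3) : ∃ h ∈ H, h ≠ 0 ∧ h i = 0 := by
  obtain ⟨j, k, hij, hik, hjk⟩ : ∃ j k, i ≠ j ∧ i ≠ k ∧ j ≠ k := ⟨i + 1, i + 2, by omega⟩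
  obtain ⟨x, hx0, hx⟩ := exists_ne_zero_notMem_ratios hcard j k
  obtain ⟨t, ht⟩ : ∃ t, (0 : F) ∈ ratios H i t := by
    rcases hH.mem_ratios_or_mul_mem_ratios hij hik hjk 0 hx0 with h | h | h
    · exact ⟨j, h⟩
    · exact ⟨k, by rwa [zero_mul] at h⟩
    · exact absurd h hx
  obtain ⟨h, hh, hht, hhi⟩ := mem_ratios_iff.mp ht
  exact ⟨h, hh, fun h0 => hht (congrFun h0 t), by rwa [zero_mul] at hhi⟩

theorem ncard_ratios_diff_zero_add_two_le {g g' : Fin 3 → F} (hg : g ∈ H) (hg' : g' ∈ H)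
    (hne : g ≠ g') (h0 : g i = 0 ∨ g j = 0) (h0' : g' i = 0 ∨ g' j = 0) :
    (ratios H i j \ {0}).ncard + 2 ≤ H.ncard := by
  have hsub : ratios H i j \ {0} ⊆ (fun h => h i / h j) '' (H \ {g, g'}) := by
    rintro _ ⟨⟨h, ⟨hh, -⟩, rfl⟩, hs⟩
    have hs : ¬(h i = 0 ∨ h j = 0) := by simpa only [mem_singleton_iff, div_eq_zero_iff] using hs
    refine ⟨h, ⟨hh, ?_⟩, rfl⟩
    rintro (rfl | rfl)
    exacts [hs h0, hs h0']
  calc (ratios H i j \ {0}).ncard + 2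
      ≤ (H \ {g, g'}).ncard + ({g, g'} : Set (Fin 3 → F)).ncard := by
        grw [ncard_pair hne, ncard_le_ncard hsub, ncard_image_le]
    _ = H.ncard := ncard_sdiff_add_ncard_of_subset (pair_subset hg hg')

theorem ShortCovering.card_le_ncard_ratios_add (hH : ShortCovering H)
    (hcard : H.ncard + 1 < Nat.card F) (hij : i ≠ j) (hik : i ≠ k) (hjk : j ≠ k) :
    Nat.card F ≤ (ratios H i j \ {0}).ncard + (ratios H i k \ {0}).ncard + 1 := by
  obtain ⟨x, hx0, hx⟩ := exists_ne_zero_notMem_ratios hcard j k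
  have hsub : {0}ᶜ ⊆ (ratios H i j \ {0}) ∪ (· / x) '' (ratios H i k \ {0}) := by
    intro y hy
    rcases hH.mem_ratios_or_mul_mem_ratios hij hik hjk y hx0 with h | h | h
    · exact .inl ⟨h, hy⟩
    · exact .inr ⟨y * x, ⟨h, mul_ne_zero hy hx0⟩, mul_div_cancel_right₀ y hx0⟩
    · exact absurd h hx
  calc Nat.card F = ({0}ᶜ : Set F).ncard + 1 := by
        rw [← ncard_add_ncard_compl {0}, ncard_singleton, add_comm]
    _ ≤ (ratios H i j \ {0}).ncard + (ratios H i k \ {0}).ncard + 1 := by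
        grw [ncard_le_ncard hsub, ncard_union_le, ncard_image_le]

theorem ShortCovering.card_add_three_le_two_mul_ncard (hH : ShortCovering H)
    (h5 : 5 ≤ Nat.card F) : Nat.card F + 3 ≤ 2 * H.ncard := by
  rcases le_or_gt (Nat.card F) (H.ncard + 1) with hcard | hcard
  · omega
  choose g hgH hg0 hg using hH.exists_ne_zero_apply_eq_zero hcard
  have hg_not_const : ¬(g 0 = g 1 ∧ g 0 = g 2) := by
    rintro ⟨h1, h2⟩
    refine hg0 0 (funext fun t => ?_)
    fin_cases t
    exacts [hg 0, h1 ▸ hg 1, h2 ▸ hg 2]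
  obtain ⟨k, i, j, hki, hkj, hij, hgi, hgj⟩ :
      ∃ k i j, k ≠ i ∧ k ≠ j ∧ i ≠ j ∧ g k ≠ g i ∧ g k ≠ g j := by
    by_cases h01 : g 0 = g 1
    · exact ⟨2, 0, 1, by decide, by decide, by decide, by grind, by grind⟩
    by_cases h02 : g 0 = g 2
    · exact ⟨1, 0, 2, by decide, by decide, by decide, by grind, by grind⟩
    · exact ⟨0, 1, 2, by decide, by decide, by decide, h01, h02⟩
  have hle := hH.card_le_ncard_ratios_add hcard hki hkj hij
  have hlei := ncard_ratios_diff_zero_add_two_le (hgH k) (hgH i) hgi (.inl (hg k)) (.inr (hg i))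
  have hlej := ncard_ratios_diff_zero_add_two_le (hgH k) (hgH j) hgj (.inl (hg k)) (.inr (hg j))
  omega

end LowerBound

theorem exists_forall_exists_pow_eq (G : Type*) [Group G] [Finite G] [IsCyclic G] :
    ∃ g : G, ∀ x : G, ∃ i < Nat.card G, g ^ i = x := by
  obtain ⟨g, hg⟩ := IsCyclic.exists_monoid_generator (α := G)
  refine ⟨g, fun x => ?_⟩
  obtain ⟨n, rfl⟩ := hg x
  exact ⟨n % Nat.card G, Nat.mod_lt _ Nat.card_pos, pow_mod_natCard g n⟩

/-- A near transversal of the Cayley table of `G`: a set of fewer than `|G|` cells, given by row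
and column, which meets every row except possibly `a` and every column except possibly `b`, and
contains every symbol except possibly `c`. -/
structure IsNearTransversal {G : Type*} [Group G] (T : Set (G × G)) (a b c : G) : Prop where
  ncard_lt : T.ncard < Nat.card G
  exists_fst_eq : ∀ x ≠ a, ∃ p ∈ T, p.1 = x
  exists_snd_eq : ∀ y ≠ b, ∃ p ∈ T, p.2 = y
  exists_mul_eq : ∀ z ≠ c, ∃ p ∈ T, p.1 * p.2 = z

section NearTransversal

variable {G : Type*} [Group G] [Finite G]

theorem isNearTransversal_diagonal_of_odd (hG : Odd (Nat.card G)) :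
    IsNearTransversal ((fun x : G => (x, x)) '' {1}ᶜ) 1 1 1 where
  ncard_lt := by
    grw [ncard_image_le, ← ncard_univ]
    exact ncard_lt_ncard (ssubset_univ_iff.mpr (by simp))
  exists_fst_eq x hx := ⟨_, mem_image_of_mem _ hx, rfl⟩
  exists_snd_eq y hy := ⟨_, mem_image_of_mem _ hy, rfl⟩
  exists_mul_eq z hz := by
    obtain ⟨x, rfl⟩ := (powCoprime hG.coprime_two_right).surjective z
    refine ⟨_, mem_image_of_mem _ ?_, (pow_two x).symm⟩
    rintro rfl
    exact hz (by simp)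

theorem exists_isNearTransversal_of_even [IsCyclic G] (hG : Even (Nat.card G)) :
    ∃ (T : Set (G × G)) (a b c : G), IsNearTransversal T a b c := by
  obtain ⟨g, hg⟩ := exists_forall_exists_pow_eq G
  obtain ⟨n, hn⟩ := even_iff_exists_two_mul.mp hG
  have hpos : 0 < Nat.card G := Nat.card_pos
  have hperiod (e : ℕ) : g ^ (2 * n + e) = g ^ e := by rw [pow_add, ← hn, pow_card_eq_one', one_mul]
  -- The products have the exponents `0, 2, …, 2 * n - 2` for `i < n` and, modulo `2 * n`,
  -- `1, 3, …, 2 * n - 3` for `n ≤ i`.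
  let cell (i : ℕ) : G × G := (g ^ i, g ^ if i < n then i else i + 1)
  have hcell {i : ℕ} (hi : i < 2 * n - 1) : cell i ∈ cell '' Iio (2 * n - 1) :=
    mem_image_of_mem _ hi
  refine ⟨cell '' Iio (2 * n - 1), g ^ (2 * n - 1), g ^ n, g ^ (2 * n - 1), ?_, ?_, ?_, ?_⟩
  · grw [ncard_image_le (finite_Iio _), ncard_eq_toFinset_card', toFinset_Iio, Nat.card_Iio]
    omega
  · intro x hx
    obtain ⟨e, he, rfl⟩ := hg x
    have hne : e ≠ 2 * n - 1 := ne_of_apply_ne _ hx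
    exact ⟨cell e, hcell (by omega), rfl⟩
  · intro y hy
    obtain ⟨e, he, rfl⟩ := hg y
    rcases lt_or_gt_of_ne (ne_of_apply_ne _ hy : e ≠ n) with hlt | hgt
    · exact ⟨cell e, hcell (by omega), by simp only [cell, if_pos hlt]⟩
    · have hsucc : e - 1 + 1 = e := by omega
      exact ⟨cell (e - 1), hcell (by omega),
        by simp only [cell, if_neg (show ¬e - 1 < n by omega), hsucc]⟩
  · intro z hz
    obtain ⟨e, he, rfl⟩ := hg z
    have hne : e ≠ 2 * n - 1 := ne_of_apply_ne _ hz
    rcases e.even_or_odd' with ⟨i, rfl | rfl⟩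
    · exact ⟨cell i, hcell (by omega),
        by simp only [cell, if_pos (show i < n by omega), ← pow_add, two_mul]⟩
    · have hexp : n + i + (n + i + 1) = 2 * n + (2 * i + 1) := by ring
      exact ⟨cell (n + i), hcell (by omega),
        by simp only [cell, if_neg (show ¬n + i < n by omega), ← pow_add, hexp, hperiod]⟩

variable (G) in
theorem exists_isNearTransversal [IsCyclic G] :
    ∃ (T : Set (G × G)) (a b c : G), IsNearTransversal T a b c :=
  (Nat.even_or_odd (Nat.card G)).elim exists_isNearTransversal_of_even
    fun hG => ⟨_, _, _, _, isNearTransversal_diagonal_of_odd hG⟩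

end NearTransversal

theorem shortCovering_of_index_eq_two {H : Set (Fin 3 → F)} {K : Subgroup Fˣ} (hK : K.index = 2)
    (h0 : ∀ i, ∃ j, i ≠ j ∧ 0 ∈ ratios H i j)
    (h01 : ∀ s ∈ K, (s : F) ∈ ratios H 0 1) (h12 : ∀ s ∈ K, (s : F) ∈ ratios H 1 2)
    (h02 : ∀ s ∈ K, (s : F) ∈ ratios H 0 2) : ShortCovering H := by
  refine shortCovering_of_mem_ratios h0 fun x z => ?_
  have hmul : x * z ∈ K ↔ (x ∈ K ↔ z ∈ K) := Subgroup.mul_mem_iff_of_index_two hK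
  have hmem : x ∈ K ∨ z ∈ K ∨ x * z ∈ K := by tauto
  exact hmem.imp (h01 x) (Or.imp (h12 z) (h02 (x * z)))

/-- The short covering attached to a near transversal `T` of the Cayley table of `K`, missing the
row `a`, the column `b` and the symbol `c`: the cell `p` attains the ratio `p.1` on the coordinates
`0, 1`, the ratio `p.2` on `1, 2` and the ratio `p.1 * p.2` on `0, 2`. -/
def transversalCovering {K : Subgroup Fˣ} (T : Set (K × K)) (a b c : K) : Set (Fin 3 → F) :=
  (fun p : K × K => ![((p.1 * p.2 : Fˣ) : F), (p.2 : Fˣ), 1]) '' T ∪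
    {![((a : Fˣ) : F), 1, 0], ![0, ((b : Fˣ) : F), 1], ![((c : Fˣ) : F), 0, 1]}

theorem IsNearTransversal.shortCovering {K : Subgroup Fˣ} (hK : K.index = 2) {T : Set (K × K)}
    {a b c : K} (hT : IsNearTransversal T a b c) : ShortCovering (transversalCovering T a b c) := by
  have hcell {p : K × K} (hp : p ∈ T) :
      ![((p.1 * p.2 : Fˣ) : F), (p.2 : Fˣ), 1] ∈ transversalCovering T a b c := .inl ⟨p, hp, rfl⟩
  have ha : ![((a : Fˣ) : F), 1, 0] ∈ transversalCovering T a b c := .inr (.inl rfl)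
  have hb : ![0, ((b : Fˣ) : F), 1] ∈ transversalCovering T a b c := .inr (.inr (.inl rfl))
  have hc : ![((c : Fˣ) : F), 0, 1] ∈ transversalCovering T a b c := .inr (.inr (.inr rfl))
  refine shortCovering_of_index_eq_two hK (fun i => ?_) (fun s hs => ?_) (fun s hs => ?_)
    fun s hs => ?_
  · fin_cases i
    · exact ⟨2, by decide, mem_ratios_iff.mpr ⟨_, hb, by simp⟩⟩
    · exact ⟨2, by decide, mem_ratios_iff.mpr ⟨_, hc, by simp⟩⟩
    · exact ⟨1, by decide, mem_ratios_iff.mpr ⟨_, ha, by simp⟩⟩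
  · lift s to K using hs
    rcases eq_or_ne s a with rfl | hsa
    · exact mem_ratios_iff.mpr ⟨_, ha, by simp⟩
    · obtain ⟨p, hp, rfl⟩ := hT.exists_fst_eq s hsa
      exact mem_ratios_iff.mpr ⟨_, hcell hp, by simp⟩
  · lift s to K using hs
    rcases eq_or_ne s b with rfl | hsb
    · exact mem_ratios_iff.mpr ⟨_, hb, by simp⟩
    · obtain ⟨p, hp, rfl⟩ := hT.exists_snd_eq s hsb
      exact mem_ratios_iff.mpr ⟨_, hcell hp, by simp⟩
  · lift s to K using hs
    rcases eq_or_ne s c with rfl | hsc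
    · exact mem_ratios_iff.mpr ⟨_, hc, by simp⟩
    · obtain ⟨p, hp, rfl⟩ := hT.exists_mul_eq s hsc
      exact mem_ratios_iff.mpr ⟨_, hcell hp, by simp⟩

theorem IsNearTransversal.ncard_transversalCovering_le [Finite F] {K : Subgroup Fˣ}
    {T : Set (K × K)} {a b c : K} (hT : IsNearTransversal T a b c) :
    (transversalCovering T a b c).ncard ≤ Nat.card K + 2 := by
  have hlt := hT.ncard_lt
  grw [transversalCovering, ncard_union_le, ncard_image_le, ncard_insert_le, ncard_insert_le,
    ncard_singleton]
  omega

theorem exists_shortCovering_of_odd [Finite F] (hF : Odd (Nat.card F)) :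
    ∃ H : Set (Fin 3 → F), ShortCovering H ∧ 2 * H.ncard ≤ Nat.card F + 3 := by
  have hunits : Nat.card Fˣ + 1 = Nat.card F := by
    rw [Nat.card_units, Nat.sub_add_cancel Nat.card_pos]
  have heven : Even (Nat.card Fˣ) := by rwa [← hunits, Nat.odd_add_one, Nat.not_odd_iff_even] at hF
  let K : Subgroup Fˣ := (powMonoidHom 2).range
  have hK : K.index = 2 := by
    rw [IsCyclic.index_powMonoidHom_range, Nat.gcd_eq_right heven.two_dvd]
  have hcard : 2 * Nat.card K = Nat.card Fˣ := hK ▸ K.index_mul_card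
  obtain ⟨T, a, b, c, hT⟩ := exists_isNearTransversal K
  have hle := hT.ncard_transversalCovering_le
  exact ⟨transversalCovering T a b c, hT.shortCovering hK, by omega⟩

/-- Six vectors which form a short covering if `g` generates the unit group of a field with `8`
elements. The first four attain the ratios `g ^ 2, …, g ^ 5` on the coordinates `0, 1` and on
`1, 2`, paired in such a way that on `0, 2` they attain `g ^ (-1), g ^ (-2), g ^ 2, g`. -/
def powCovering (g : F) : Set (Fin 3 → F) :=
  {![g ^ 6, g ^ 4, 1], ![g ^ 5, g ^ 2, 1], ![g ^ 9, g ^ 5, 1], ![g ^ 8, g ^ 3, 1],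
    ![1, 0, 1], ![0, 1, 0]}

section PowCovering

theorem ncard_powCovering_le (g : F) : (powCovering g).ncard ≤ 6 := by
  grw [powCovering, ncard_insert_le, ncard_insert_le, ncard_insert_le, ncard_insert_le,
    ncard_insert_le, ncard_singleton]

theorem exists_zero_mem_ratios_powCovering (g : F) (i : Fin 3) :
    ∃ j, i ≠ j ∧ 0 ∈ ratios (powCovering g) i j := by
  have hmem : ![1, 0, 1] ∈ powCovering g ∧ ![0, 1, 0] ∈ powCovering g := by simp [powCovering]
  fin_cases i
  · exact ⟨1, by decide, mem_ratios_iff.mpr ⟨_, hmem.2, by simp⟩⟩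
  · exact ⟨2, by decide, mem_ratios_iff.mpr ⟨_, hmem.1, by simp⟩⟩
  · exact ⟨1, by decide, mem_ratios_iff.mpr ⟨_, hmem.2, by simp⟩⟩

variable {g : F} {n : ℕ}

theorem pow_mem_ratios_powCovering_zero_one (hg : g ≠ 0) (hn : n ∈ Icc 2 5) :
    g ^ n ∈ ratios (powCovering g) 0 1 := by
  obtain ⟨hl, hu⟩ := hn
  interval_cases n <;> simp [mem_ratios_iff, powCovering, hg, ← pow_add]

theorem pow_mem_ratios_powCovering_one_two (hn : n ∈ Icc 2 5) :
    g ^ n ∈ ratios (powCovering g) 1 2 := by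
  obtain ⟨hl, hu⟩ := hn
  interval_cases n <;> simp [mem_ratios_iff, powCovering]

theorem pow_mem_ratios_powCovering_zero_two (hg : g ^ 7 = 1) (hn : n % 7 ∉ Icc 3 4) :
    g ^ n ∈ ratios (powCovering g) 0 2 := by
  have h8 : g ^ 8 = g := by rw [pow_succ, hg, one_mul]
  have h9 : g ^ 9 = g ^ 2 := by rw [pow_add g 7 2, hg, one_mul]
  have hlt : n % 7 < 7 := Nat.mod_lt _ (by norm_num)
  rw [pow_eq_pow_mod n hg]
  generalize n % 7 = r at hn hlt ⊢
  interval_cases r <;> simp_all [mem_ratios_iff, powCovering]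

end PowCovering

theorem exists_shortCovering_of_card_eq_eight (hF : Nat.card F = 8) :
    ∃ H : Set (Fin 3 → F), ShortCovering H ∧ H.ncard ≤ 6 := by
  have : Finite F := Nat.finite_of_card_ne_zero (by omega)
  have hunits : Nat.card Fˣ = 7 := by rw [Nat.card_units, hF]
  obtain ⟨g, hg⟩ := exists_forall_exists_pow_eq Fˣ
  have hg7 : (g : F) ^ 7 = 1 := by
    rw [← hunits, ← Units.val_pow_eq_pow_val, pow_card_eq_one', Units.val_one]
  refine ⟨powCovering g, shortCovering_of_mem_ratios (exists_zero_mem_ratios_powCovering _)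
    fun x z => ?_, ncard_powCovering_le _⟩
  obtain ⟨m, hm, rfl⟩ := hg x
  obtain ⟨n, hn, rfl⟩ := hg z
  have hmn : m ∈ Icc 2 5 ∨ n ∈ Icc 2 5 ∨ (m + n) % 7 ∉ Icc 3 4 := by
    simp only [mem_Icc]
    omega
  rw [← pow_add, Units.val_pow_eq_pow_val, Units.val_pow_eq_pow_val, Units.val_pow_eq_pow_val]
  exact hmn.imp (pow_mem_ratios_powCovering_zero_one g.ne_zero)
    (Or.imp pow_mem_ratios_powCovering_one_two (pow_mem_ratios_powCovering_zero_two hg7))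

theorem stmt_3_general (hF : (Odd (Nat.card F) ∧ 5 ≤ Nat.card F) ∨ Nat.card F = 8) :
    IsLeast {n : ℕ | ∃ H : Set (Fin 3 → F), ShortCovering H ∧ H.ncard = n}
      ((Nat.card F + 4) / 2) := by
  have : Finite F := Nat.finite_of_card_ne_zero (by omega)
  have hlower (H : Set (Fin 3 → F)) (hH : ShortCovering H) : (Nat.card F + 4) / 2 ≤ H.ncard := by
    have := hH.card_add_three_le_two_mul_ncard (by omega)
    omega
  obtain ⟨H, hH, hupper⟩ :
      ∃ H : Set (Fin 3 → F), ShortCovering H ∧ H.ncard ≤ (Nat.card F + 4) / 2 := by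
    rcases hF with ⟨hodd, -⟩ | h8
    · obtain ⟨H, hH, hle⟩ := exists_shortCovering_of_odd hodd
      exact ⟨H, hH, by omega⟩
    · obtain ⟨H, hH, hle⟩ := exists_shortCovering_of_card_eq_eight h8
      exact ⟨H, hH, by omega⟩
  exact ⟨⟨H, hH, hupper.antisymm (hlower H hH)⟩, fun n ⟨H', hH', hn⟩ => hn ▸ hlower H' hH'⟩

theorem stmt_3 :
    IsLeast {n : ℕ | ∃ H : Set (Fin 3 → ZMod 7), ShortCovering H ∧ H.ncard = n} 5 ∧
    IsLeast {n : ℕ | ∃ H : Set (Fin 3 → GaloisField 2 3), ShortCovering H ∧ H.ncard = n} 6 ∧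
    IsLeast {n : ℕ | ∃ H : Set (Fin 3 → GaloisField 3 2), ShortCovering H ∧ H.ncard = n} 6 := by
  have h7 : Nat.card (ZMod 7) = 7 := Nat.card_zmod 7
  have h8 : Nat.card (GaloisField 2 3) = 8 := GaloisField.card 2 3 (by norm_num)
  have h9 : Nat.card (GaloisField 3 2) = 9 := GaloisField.card 3 2 (by norm_num)
  refine ⟨?_, ?_, ?_⟩
  · simpa only [h7] using stmt_3_general (F := ZMod 7) (by rw [h7]; decide)
  · simpa only [h8] using stmt_3_general (F := GaloisField 2 3) (by rw [h8]; decide)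
  · simpa only [h9] using stmt_3_general (F := GaloisField 3 2) (by rw [h9]; decide)
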